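/- Let n, p, f be positive integers, let Y ∈ ℝ^n, let γ > 0, let v₁, …, v_f ∈ ℝ^n be feature vectors, let A : {1,…,f} → Finset({1,…,p}) assign to each feature index j its set of ancestor inputs, and let k ≤ p and ℓ ≤ f be positive integers. Define the micro kernel matrices K_j := v_j v_jᵀ. Then the minimum, over all w ∈ ℝ^f such that |supp(w)| ≤ ℓ and there exists h ∈ {0,1}^p with Σ_{i=1}^p h_i ≤ k and such that for every j ∈ supp(w) and every i ∈ A(j) one has h_i = 1, of (1/2)‖Y − Σ_{j=1}^f w_j v_j‖² + (1/(2γ))‖w‖², equals the minimum, over all pairs (s, h) with s ∈ {0,1}^f, h ∈ {0,1}^p, Σ_j s_j ≤ ℓ, Σ_i h_i ≤ k, and s_j ≤ h_i for every j and every i ∈ A(j), of (1/2) Yᵀ (I_n + γ Σ_{j=1}^f s_j K_j)⁻¹ Y. -/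

import Mathlib

open Matrix

/-!
For feature vectors forming the rows of `V`, the ridge objective is a quadratic in the weights. With
`u = (1 + γ VᵀV)⁻¹ y`, its minimizer is `γ V u` and leaves the residual `u`, and completing the
square gives the minimum `½ ⟨y, u⟩`. Restricting the weights to a binary support pattern `s` amounts
to replacing `V` by `diag(s) V`, because `s² = s`. The sparsity constraint says precisely that the
support of the weights lies in one of finitely many admissible patterns, so it remains to minimize
the closed-form value over these patterns.
-/

open Function

section Order

theorem isLeast_biUnion_of_isLeast {α β : Type*} [Preorder α] {I : Set β} {t : β → Set α}
    {g : β → α} {m : α} (ht : ∀ i ∈ I, IsLeast (t i) (g i)) (hm : IsLeast (g '' I) m) :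
    IsLeast (⋃ i ∈ I, t i) m := by
  obtain ⟨⟨i₀, hi₀, rfl⟩, hlower⟩ := hm
  refine ⟨Set.mem_biUnion hi₀ (ht i₀ hi₀).1, fun x hx => ?_⟩
  obtain ⟨i, hi, hxi⟩ := Set.mem_iUnion₂.1 hx
  exact (hlower ⟨i, hi, rfl⟩).trans ((ht i hi).2 hxi)

end Order

section Binary

variable {α β : Type*}

/-- The real vector `s` has entries in `{0, 1}`; such vectors encode subsets by their support. -/
def IsBinary (s : α → ℝ) : Prop :=
  ∀ a, s a = 0 ∨ s a = 1

theorem finite_setOf_isBinary [Finite α] : {s : α → ℝ | IsBinary s}.Finite :=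
  Set.Finite.pi' fun _ => Set.toFinite {0, 1}

theorem isBinary_indicator_one (t : Set α) : IsBinary (t.indicator (1 : α → ℝ)) :=
  t.indicator_eq_zero_or_self 1

namespace IsBinary

variable {s : α → ℝ} {h : β → ℝ}

theorem mul_self (hs : IsBinary s) (a : α) : s a * s a = s a := by
  rcases hs a with h | h <;> simp [h]

theorem le_iff (hs : IsBinary s) (hh : IsBinary h) {a : α} {b : β} :
    s a ≤ h b ↔ (s a ≠ 0 → h b = 1) := by
  rcases hs a with ha | ha <;> rcases hh b with hb | hb <;> simp [ha, hb]

theorem sum_eq_card [Fintype α] (hs : IsBinary s) :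
    ∑ a, s a = (Finset.univ.filter fun a => s a ≠ 0).card := by
  rw [Finset.natCast_card_filter]
  refine Finset.sum_congr rfl fun a _ => ?_
  rcases hs a with h | h <;> simp [h]

theorem mul_eq_of_support_subset (hs : IsBinary s) {w : α → ℝ} (hw : support w ⊆ support s) :
    w * s = w := by
  ext a
  rcases hs a with h | h
  · have hwa : w a = 0 := notMem_support.1 fun ha => hw ha h
    simp [hwa]
  · simp [h]

end IsBinary

end Binary

section Ridge

theorem posDef_one_add_smul_transpose_mul_self {κ ι : Type*} [Finite κ] [DecidableEq κ] [Fintype ι]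
    (V : Matrix ι κ ℝ) {γ : ℝ} (hγ : 0 ≤ γ) :
    (1 + γ • (Vᵀ * V)).PosDef := by
  have hgram : (Vᵀ * V).PosSemidef := by
    simpa only [conjTranspose_eq_transpose_of_trivial] using posSemidef_conjTranspose_mul_self V
  exact PosDef.one.add_posSemidef (hgram.smul hγ)

variable {κ ι : Type*} [Fintype κ] [Fintype ι]
variable {V : Matrix ι κ ℝ} {y : κ → ℝ} {γ : ℝ}

/-- The ridge regression objective `½‖y - ∑ⱼ wⱼ Vⱼ‖² + ‖w‖² / (2γ)`, where the feature vectors `Vⱼ`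
are the rows of `V`. -/
noncomputable def ridgeObjective (V : Matrix ι κ ℝ) (y : κ → ℝ) (γ : ℝ) (w : ι → ℝ) : ℝ :=
  (1/2) * ((y - w ᵥ* V) ⬝ᵥ (y - w ᵥ* V)) + (1/(2*γ)) * (w ⬝ᵥ w)

variable [DecidableEq κ]

/-- The residual `(1 + γ VᵀV)⁻¹ y` that the optimal ridge regression weights leave. -/
noncomputable def ridgeResidual (V : Matrix ι κ ℝ) (y : κ → ℝ) (γ : ℝ) : κ → ℝ :=
  (1 + γ • (Vᵀ * V))⁻¹ *ᵥ y

/-- The optimal ridge regression weights, expressed through their residual. -/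
noncomputable def ridgeMinimizer (V : Matrix ι κ ℝ) (y : κ → ℝ) (γ : ℝ) : ι → ℝ :=
  γ • V *ᵥ ridgeResidual V y γ

theorem ridgeResidual_add_ridgeMinimizer_vecMul (hγ : 0 ≤ γ) :
    ridgeResidual V y γ + ridgeMinimizer V y γ ᵥ* V = y := by
  have hdet : IsUnit (1 + γ • (Vᵀ * V)).det :=
    (isUnit_iff_isUnit_det _).1 (posDef_one_add_smul_transpose_mul_self V hγ).isUnit
  calc ridgeResidual V y γ + ridgeMinimizer V y γ ᵥ* V
      = (1 + γ • (Vᵀ * V)) *ᵥ ridgeResidual V y γ := by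
        rw [add_mulVec, one_mulVec, smul_mulVec, ← mulVec_mulVec, mulVec_transpose,
          ridgeMinimizer, smul_vecMul]
    _ = y := by rw [ridgeResidual, mulVec_mulVec, mul_nonsing_inv _ hdet, one_mulVec]

theorem ridgeMinimizer_dotProduct (w : ι → ℝ) :
    ridgeMinimizer V y γ ⬝ᵥ w = γ * (ridgeResidual V y γ ⬝ᵥ w ᵥ* V) := by
  rw [ridgeMinimizer, smul_dotProduct, smul_eq_mul, dotProduct_comm _ w, dotProduct_mulVec,
    dotProduct_comm]

theorem ridgeObjective_ridgeMinimizer_add (hγ : 0 < γ) (d : ι → ℝ) :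
    ridgeObjective V y γ (ridgeMinimizer V y γ + d) =
      (1/2) * (y ⬝ᵥ ridgeResidual V y γ) +
        ((1/2) * (d ᵥ* V ⬝ᵥ d ᵥ* V) + (1/(2*γ)) * (d ⬝ᵥ d)) := by
  have hy := ridgeResidual_add_ridgeMinimizer_vecMul (V := V) (y := y) hγ.le
  have hcross := ridgeMinimizer_dotProduct (V := V) (y := y) (γ := γ)
  set u := ridgeResidual V y γ
  set w := ridgeMinimizer V y γ
  have hresidual : y - (w + d) ᵥ* V = u - d ᵥ* V := by
    rw [add_vecMul, ← hy]
    abel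
  have hfit : y ⬝ᵥ u = u ⬝ᵥ u + u ⬝ᵥ w ᵥ* V := by
    rw [dotProduct_comm, ← dotProduct_add, hy]
  rw [ridgeObjective, hresidual, hfit]
  simp only [sub_dotProduct, dotProduct_sub, add_dotProduct, dotProduct_add,
    dotProduct_comm d w, dotProduct_comm (d ᵥ* V) u, hcross]
  field_simp
  ring

theorem ridgeObjective_ridgeMinimizer (hγ : 0 < γ) :
    ridgeObjective V y γ (ridgeMinimizer V y γ) = (1/2) * (y ⬝ᵥ ridgeResidual V y γ) := by
  simpa using ridgeObjective_ridgeMinimizer_add (V := V) (y := y) hγ 0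

theorem half_dotProduct_ridgeResidual_le_ridgeObjective (hγ : 0 < γ) (w : ι → ℝ) :
    (1/2) * (y ⬝ᵥ ridgeResidual V y γ) ≤ ridgeObjective V y γ w := by
  rw [← add_sub_cancel (ridgeMinimizer V y γ) w, ridgeObjective_ridgeMinimizer_add hγ]
  have hfit := dotProduct_self_star_nonneg ((w - ridgeMinimizer V y γ) ᵥ* V)
  have hpenalty := dotProduct_self_star_nonneg (w - ridgeMinimizer V y γ)
  simp only [star_trivial] at hfit hpenalty
  exact le_add_of_nonneg_right (by positivity)

end Ridge

section SparseRidge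

variable {κ ι : Type*} [Fintype ι] {V : Matrix ι κ ℝ} {y : κ → ℝ} {γ : ℝ} {s : ι → ℝ}

theorem transpose_mul_self_diagonal_mul [DecidableEq ι] (V : Matrix ι κ ℝ) (hs : IsBinary s) :
    (diagonal s * V)ᵀ * (diagonal s * V) = ∑ j, s j • vecMulVec (V j) (V j) := by
  ext a b
  rw [mul_apply, Matrix.sum_apply]
  refine Finset.sum_congr rfl fun j _ => ?_
  simp only [transpose_apply, diagonal_mul, Matrix.smul_apply, vecMulVec_apply, smul_eq_mul]
  rw [mul_mul_mul_comm, hs.mul_self]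

theorem ridgeObjective_diagonal_mul [Fintype κ] [DecidableEq ι] (hs : IsBinary s) {w : ι → ℝ}
    (hw : support w ⊆ support s) :
    ridgeObjective (diagonal s * V) y γ w = ridgeObjective V y γ w := by
  have hmask : w ᵥ* diagonal s = w := by
    ext j
    rw [vecMul_diagonal]
    exact congrFun (hs.mul_eq_of_support_subset hw) j
  simp only [ridgeObjective, ← vecMul_vecMul, hmask]

variable [Fintype κ] [DecidableEq κ]

/-- The value `½ yᵀ (1 + γ ∑ⱼ sⱼ Vⱼ Vⱼᵀ)⁻¹ y` of the pattern `s`; for binary `s` it is the optimal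
ridge regression value over weights supported in `s`. -/
noncomputable def patternValue (V : Matrix ι κ ℝ) (y : κ → ℝ) (γ : ℝ) (s : ι → ℝ) : ℝ :=
  (1/2) * (y ⬝ᵥ (1 + γ • ∑ j, s j • vecMulVec (V j) (V j))⁻¹ *ᵥ y)

theorem patternValue_eq_half_dotProduct_ridgeResidual [DecidableEq ι] (hs : IsBinary s) :
    patternValue V y γ s = (1/2) * (y ⬝ᵥ ridgeResidual (diagonal s * V) y γ) := by
  rw [patternValue, ridgeResidual, transpose_mul_self_diagonal_mul V hs]

theorem support_ridgeMinimizer_diagonal_mul_subset [DecidableEq ι] :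
    support (ridgeMinimizer (diagonal s * V) y γ) ⊆ support s := by
  intro j hj hsj
  apply hj
  rw [ridgeMinimizer, ← mulVec_mulVec, Pi.smul_apply, mulVec_diagonal, hsj, zero_mul, smul_zero]

theorem isLeast_ridgeObjective_image_support_subset (hγ : 0 < γ) (hs : IsBinary s) :
    IsLeast (ridgeObjective V y γ '' {w | support w ⊆ support s}) (patternValue V y γ s) := by
  classical
  rw [patternValue_eq_half_dotProduct_ridgeResidual hs]
  constructor
  · refine ⟨ridgeMinimizer (diagonal s * V) y γ, support_ridgeMinimizer_diagonal_mul_subset, ?_⟩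
    rw [← ridgeObjective_diagonal_mul hs support_ridgeMinimizer_diagonal_mul_subset,
      ridgeObjective_ridgeMinimizer hγ]
  · rintro _ ⟨w, hw, rfl⟩
    rw [← ridgeObjective_diagonal_mul hs hw]
    exact half_dotProduct_ridgeResidual_le_ridgeObjective hγ w

theorem exists_isLeast_ridgeObjective_and_patternValue (V : Matrix ι κ ℝ) (y : κ → ℝ) (hγ : 0 < γ)
    {S : Set (ι → ℝ)} (hS : ∀ s ∈ S, IsBinary s) (hne : S.Nonempty) :
    ∃ m, IsLeast (ridgeObjective V y γ '' {w | ∃ s ∈ S, support w ⊆ support s}) m ∧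
      IsLeast (patternValue V y γ '' S) m := by
  obtain ⟨s, hsS, hmin⟩ :=
    Set.exists_min_image S (patternValue V y γ) (finite_setOf_isBinary.subset hS) hne
  have hleast : IsLeast (patternValue V y γ '' S) (patternValue V y γ s) :=
    ⟨Set.mem_image_of_mem _ hsS, Set.forall_mem_image.2 hmin⟩
  refine ⟨patternValue V y γ s, ?_, hleast⟩
  have hunion : {w : ι → ℝ | ∃ s ∈ S, support w ⊆ support s} =
      ⋃ s ∈ S, {w | support w ⊆ support s} := by
    ext w
    simp only [Set.mem_ofPred_eq, Set.mem_iUnion, exists_prop]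
  rw [hunion, Set.image_iUnion₂]
  exact isLeast_biUnion_of_isLeast
    (fun s hs => isLeast_ridgeObjective_image_support_subset hγ (hS s hs)) hleast

end SparseRidge

section Hierarchy

variable {ι π : Type*} [Fintype ι] [Fintype π] {A : ι → Finset π} {k ℓ : ℕ}

/-- Hierarchical `(k, ℓ)`-sparsity of `w`, where `A j` is the set of ancestors of `j`: at most `ℓ`
entries are nonzero, and at most `k` inputs, encoded by a binary vector `h`, contain all ancestors
of the support. -/
def IsHierarchicallySparse (A : ι → Finset π) (k ℓ : ℕ) (w : ι → ℝ) : Prop :=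
  (Finset.univ.filter (fun j => w j ≠ 0)).card ≤ ℓ ∧
    ∃ h : π → ℝ, IsBinary h ∧ (∑ i, h i) ≤ (k : ℝ) ∧ ∀ j, w j ≠ 0 → ∀ i ∈ A j, h i = 1

/-- The binary vectors `s` that form a feasible pair `(s, h)` of the pure binary problem for some
selection `h` of inputs. -/
def hierarchicalPatterns (A : ι → Finset π) (k ℓ : ℕ) : Set (ι → ℝ) :=
  {s | ∃ h : π → ℝ, IsBinary s ∧ IsBinary h ∧ (∑ j, s j) ≤ (ℓ : ℝ) ∧ (∑ i, h i) ≤ (k : ℝ) ∧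
    ∀ j, ∀ i ∈ A j, s j ≤ h i}

theorem IsHierarchicallySparse.mono {w w' : ι → ℝ} (hw : IsHierarchicallySparse A k ℓ w)
    (hsub : support w' ⊆ support w) : IsHierarchicallySparse A k ℓ w' := by
  obtain ⟨hcard, h, hh, hsum, hanc⟩ := hw
  refine ⟨(Finset.card_le_card ?_).trans hcard, h, hh, hsum, fun j hj => hanc j (hsub hj)⟩
  exact Finset.monotone_filter_right _ fun j _ hj => hsub hj

theorem mem_hierarchicalPatterns_iff {s : ι → ℝ} :
    s ∈ hierarchicalPatterns A k ℓ ↔ IsBinary s ∧ IsHierarchicallySparse A k ℓ s := by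
  constructor
  · rintro ⟨h, hs, hh, hsℓ, hhk, hle⟩
    rw [hs.sum_eq_card, Nat.cast_le] at hsℓ
    exact ⟨hs, hsℓ, h, hh, hhk, fun j hj i hi => (hs.le_iff hh).1 (hle j i hi) hj⟩
  · rintro ⟨hs, hsℓ, h, hh, hhk, hanc⟩
    rw [← Nat.cast_le (α := ℝ), ← hs.sum_eq_card] at hsℓ
    exact ⟨h, hs, hh, hsℓ, hhk, fun j i hi => (hs.le_iff hh).2 fun hj => hanc j hj i hi⟩

theorem zero_mem_hierarchicalPatterns : (0 : ι → ℝ) ∈ hierarchicalPatterns A k ℓ :=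
  ⟨0, fun _ => .inl rfl, fun _ => .inl rfl, by simp, by simp, fun _ _ _ => le_rfl⟩

theorem isHierarchicallySparse_iff_exists_support_subset {w : ι → ℝ} :
    IsHierarchicallySparse A k ℓ w ↔
      ∃ s ∈ hierarchicalPatterns A k ℓ, support w ⊆ support s := by
  simp only [mem_hierarchicalPatterns_iff]
  refine ⟨fun hw => ?_, fun ⟨s, ⟨_, hs⟩, hsub⟩ => hs.mono hsub⟩
  have hsupport : support ((support w).indicator (1 : ι → ℝ)) = support w := by simp
  exact ⟨_, ⟨isBinary_indicator_one (support w), hw.mono hsupport.subset⟩, hsupport.superset⟩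

end Hierarchy

/-- the hierarchical `(k,ℓ)`-sparse ridge regression problem equals the
pure binary optimization problem `min (1/2) Yᵀ (I_n + γ Σ_j s_j K_j)⁻¹ Y` over hierarchical
binary sparsity patterns `(s, h)`, where `K_j = v_j v_jᵀ`.  Both minima exist and agree. -/
theorem hierarchical_sparse_regression (n p f : ℕ) (hn : 0 < n) (hp : 0 < p) (hf : 0 < f)
    (Y : Fin n → ℝ) (γ : ℝ) (hγ : 0 < γ) (v : Fin f → Fin n → ℝ)
    (A : Fin f → Finset (Fin p)) (k ℓ : ℕ) (hk : 0 < k) (hkp : k ≤ p)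
    (hℓ : 0 < ℓ) (hℓf : ℓ ≤ f) :
    ∃ m : ℝ,
      IsLeast {x : ℝ | ∃ w : Fin f → ℝ,
        (Finset.univ.filter (fun j => w j ≠ 0)).card ≤ ℓ ∧
        (∃ h : Fin p → ℝ, (∀ i, h i = 0 ∨ h i = 1) ∧ (∑ i, h i) ≤ (k : ℝ) ∧
          ∀ j, w j ≠ 0 → ∀ i ∈ A j, h i = 1) ∧
        x = (1/2) * ((Y - ∑ j, w j • v j) ⬝ᵥ (Y - ∑ j, w j • v j)) +
              (1/(2*γ)) * (w ⬝ᵥ w)} m ∧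
      IsLeast {x : ℝ | ∃ s : Fin f → ℝ, ∃ h : Fin p → ℝ,
        (∀ j, s j = 0 ∨ s j = 1) ∧ (∀ i, h i = 0 ∨ h i = 1) ∧
        (∑ j, s j) ≤ (ℓ : ℝ) ∧ (∑ i, h i) ≤ (k : ℝ) ∧
        (∀ j, ∀ i ∈ A j, s j ≤ h i) ∧
        x = (1/2) * (Y ⬝ᵥ ((1 + γ • ∑ j, s j • vecMulVec (v j) (v j))⁻¹.mulVec Y))} m := by
  obtain ⟨m, hweights, hpatterns⟩ := exists_isLeast_ridgeObjective_and_patternValue (of v) Y hγ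
    (fun s hs => (mem_hierarchicalPatterns_iff.1 hs).1)
    ⟨0, zero_mem_hierarchicalPatterns (A := A) (k := k) (ℓ := ℓ)⟩
  simp only [← isHierarchicallySparse_iff_exists_support_subset] at hweights
  refine ⟨m, ?_, ?_⟩
  · convert hweights using 1
    ext x
    simp only [Set.mem_image, Set.mem_ofPred_eq, IsHierarchicallySparse, IsBinary, ridgeObjective,
      vecMul_eq_sum, and_assoc, eq_comm (a := x)]
    rfl
  · convert hpatterns using 1
    ext x
    simp only [Set.mem_image, Set.mem_ofPred_eq, hierarchicalPatterns, IsBinary, patternValue,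
      ← exists_and_right, and_assoc, eq_comm (a := x)]
    rfl
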